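/- arXiv:1601.02299 — 2 statements merged into one kernel-verified Lean document; each statement's English description precedes it below -/
import Mathlib

section
/- Let λ_σ, β, d, R, B > 0 and set f(x) := tanh(Bx) and s(x) := 1/cosh(Bx). Then ∫_ℝ [ ½ s'(x)² + (λ_σ/4)(s(x)² − 2)s(x)² + (β/2) f(x)² s(x)² + (d²/(2R²)) s(x)² ] dx = (1/B) ( B²/3 + β/3 + d²/R² − 2λ_σ/3 ). -/
/-!
Put `t = tanh u` with `u = B x`. Since `s² = 1 - t²` and `s' = -B t s`, the energy density is
`s² (a + b t²)` with `a = d²/(2R²) - lamσ/4` and `b = B²/2 - lamσ/4 + β/2`. As `dt/du = sech² u`,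
this is the `u`-derivative of `a t + b t³/3`, so the `u`-integral is `2 (a + b/3)`, and rescaling
`x` produces the factor `1/B`. Integrability follows from `0 ≤ sech²`, whose integral over any
interval is a difference of values of `tanh`, hence at most `2`.
-/

open MeasureTheory Real

lemma hasDerivAt_tanh_sech_sq (u : ℝ) : HasDerivAt Real.tanh ((Real.cosh u)⁻¹ ^ 2) u := by
  have hc : Real.cosh u ≠ 0 := (Real.cosh_pos u).ne'
  have h := (Real.hasDerivAt_sinh u).div (Real.hasDerivAt_cosh u) hc
  have e : Real.tanh = Real.sinh / Real.cosh := by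
    funext y; exact Real.tanh_eq_sinh_div_cosh y
  rw [e]
  refine h.congr_deriv ?_
  field_simp
  linarith [Real.cosh_sq u]

lemma tendsto_tanh_atTop_one : Filter.Tendsto Real.tanh Filter.atTop (nhds 1) := by
  have e : Real.tanh = fun x => 1 - 2 / (Real.exp (2 * x) + 1) := by
    funext x
    have h1 := Real.exp_pos x
    rw [Real.tanh_eq, Real.exp_neg, two_mul, Real.exp_add]
    field_simp
    ring
  rw [e]
  have h1 : Filter.Tendsto (fun x : ℝ => Real.exp (2 * x) + 1) Filter.atTop Filter.atTop :=
    Filter.tendsto_atTop_add_const_right _ _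
      (Real.tendsto_exp_atTop.comp (Filter.tendsto_id.const_mul_atTop two_pos))
  simpa using (h1.const_div_atTop 2).const_sub 1

lemma tendsto_tanh_atBot_neg_one : Filter.Tendsto Real.tanh Filter.atBot (nhds (-1)) := by
  have h := (tendsto_tanh_atTop_one.comp Filter.tendsto_neg_atBot_atTop).neg
  refine h.congr fun x => ?_
  simp [Real.tanh_neg]

lemma continuous_sech_sq : Continuous fun u : ℝ => (Real.cosh u)⁻¹ ^ 2 :=
  (Real.continuous_cosh.inv₀ fun u => (Real.cosh_pos u).ne').pow 2

lemma integrable_sech_sq : Integrable fun u : ℝ => (Real.cosh u)⁻¹ ^ 2 := by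
  refine integrable_of_intervalIntegral_norm_bounded (l := Filter.atTop)
    (a := fun r : ℝ => -r) (b := fun r : ℝ => r) 2
    (fun r => continuous_sech_sq.integrableOn_Ioc) Filter.tendsto_neg_atTop_atBot
    Filter.tendsto_id (Filter.Eventually.of_forall fun r => ?_)
  simp only [Real.norm_eq_abs, abs_of_nonneg (sq_nonneg (Real.cosh _)⁻¹)]
  rw [intervalIntegral.integral_eq_sub_of_hasDerivAt (fun u _ => hasDerivAt_tanh_sech_sq u)
    (continuous_sech_sq.intervalIntegrable _ _)]
  linarith [Real.tanh_lt_one r, Real.neg_one_lt_tanh (-r)]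

lemma integral_sech_sq_mul (a b : ℝ) :
    ∫ u : ℝ, (Real.cosh u)⁻¹ ^ 2 * (a + b * Real.tanh u ^ 2) = 2 * (a + b / 3) := by
  have hcont : Continuous Real.tanh :=
    continuous_iff_continuousAt.2 fun u => (hasDerivAt_tanh_sech_sq u).continuousAt
  have hinteg : Integrable fun u : ℝ => (Real.cosh u)⁻¹ ^ 2 * (a + b * Real.tanh u ^ 2) := by
    refine integrable_sech_sq.mul_bdd (c := |a| + |b|)
      (by fun_prop) (Filter.Eventually.of_forall fun u => ?_)
    rw [Real.norm_eq_abs]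
    refine (abs_add_le _ _).trans (add_le_add_right ?_ _)
    rw [abs_mul, abs_of_nonneg (sq_nonneg (Real.tanh u))]
    exact mul_le_of_le_one_right (abs_nonneg b) (Real.tanh_sq_lt_one u).le
  have hderiv : ∀ u : ℝ, HasDerivAt (fun u => a * Real.tanh u + b / 3 * Real.tanh u ^ 3)
      ((Real.cosh u)⁻¹ ^ 2 * (a + b * Real.tanh u ^ 2)) u := fun u => by
    have h := hasDerivAt_tanh_sech_sq u
    refine ((h.const_mul a).add ((h.pow 3).const_mul (b / 3))).congr_deriv ?_
    norm_num
    ring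
  rw [integral_of_hasDerivAt_of_tendsto hderiv hinteg
    ((tendsto_tanh_atBot_neg_one.const_mul a).add
      ((tendsto_tanh_atBot_neg_one.pow 3).const_mul (b / 3)))
    ((tendsto_tanh_atTop_one.const_mul a).add
      ((tendsto_tanh_atTop_one.pow 3).const_mul (b / 3)))]
  ring

/-- The σ-dependent part of the energy of the test current
`s(x) = sech(Bx)` against the kink `f(x) = tanh(Bx)` evaluates to
`(1/B)(B²/3 + β/3 + d²/R² − 2λ_σ/3)`. -/
theorem sigma_energy_of_sech_test_current
    (lamσ β d R B : ℝ) (hlam : 0 < lamσ) (hβ : 0 < β) (hd : 0 < d)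
    (hR : 0 < R) (hB : 0 < B)
    (f s : ℝ → ℝ) (hf : f = fun x => Real.tanh (B * x))
    (hs : s = fun x => (Real.cosh (B * x))⁻¹) :
    (∫ x : ℝ, ((deriv s x) ^ 2 / 2
        + lamσ / 4 * ((s x) ^ 2 - 2) * (s x) ^ 2
        + β / 2 * (f x) ^ 2 * (s x) ^ 2
        + d ^ 2 / (2 * R ^ 2) * (s x) ^ 2))
      = (1 / B) * (B ^ 2 / 3 + β / 3 + d ^ 2 / R ^ 2 - 2 * lamσ / 3) := by
  subst hf hs
  have hds : ∀ x : ℝ, deriv (fun x => (Real.cosh (B * x))⁻¹) x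
      = -(B * Real.tanh (B * x) * (Real.cosh (B * x))⁻¹) := fun x => by
    have hc : Real.cosh (B * x) ≠ 0 := (Real.cosh_pos _).ne'
    have h := (((hasDerivAt_id x).const_mul B).cosh).inv hc
    refine h.deriv.trans ?_
    rw [Real.tanh_eq_sinh_div_cosh]
    simp only [id]
    field_simp
  have hsq : ∀ u : ℝ, (Real.cosh u)⁻¹ ^ 2 = 1 - Real.tanh u ^ 2 := fun u => by
    have hc : Real.cosh u ≠ 0 := (Real.cosh_pos u).ne'
    rw [Real.tanh_eq_sinh_div_cosh]
    field_simp
    linarith [Real.cosh_sq u]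
  have key := Measure.integral_comp_mul_left (fun u : ℝ => (Real.cosh u)⁻¹ ^ 2 *
    ((d ^ 2 / (2 * R ^ 2) - lamσ / 4)
      + (B ^ 2 / 2 - lamσ / 4 + β / 2) * Real.tanh u ^ 2)) B
  rw [integral_sech_sq_mul, abs_of_pos (inv_pos.2 hB), smul_eq_mul] at key
  calc _ = _ := by
        refine integral_congr_ae (Filter.Eventually.of_forall fun x => ?_)
        simp only [hds, neg_sq, mul_pow, hsq]
        ring
    _ = _ := key
    _ = _ := by
        field_simp
        ring
end

section
/- Let 0 < k ≤ K, T > 0, and let R ∈ C²([0,T]; ℝ) satisfy R'(0) = 0, |R'(y)| < 1 for all y ∈ [0,T], and −K(1 − R'(y)²) ≤ R''(y) ≤ −k(1 − R'(y)²) for all y ∈ [0,T]. Then for all y ∈ [0,T]: −tanh(K y) ≤ R'(y) ≤ −tanh(k y), and R(0) − (1/K) log cosh(K y) ≤ R(y) ≤ R(0) − (1/k) log cosh(k y). -/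
open Set

/-!
For `|v| < 1` the inequality `v' ≤ -c (1 - v²)` says exactly that `artanh v` has derivative at
most `-c`. So `artanh (v y) + c y` is nonincreasing, and `v 0 = 0` gives `v y ≤ -tanh (c y)`.
Since `log (cosh (c y)) / c` has derivative `tanh (c y)`, integrating once more bounds a primitive
of `v`. The comparison constant `c` may have any sign, so the upper bounds are the case `v = R'`,
`c = k`, and the lower bounds are the case `v = -R'`, `c = -K`.
-/

theorem antitoneOn_Icc_of_hasDerivWithinAt {T : ℝ} {f f' : ℝ → ℝ}
    (hf : ∀ y ∈ Icc (0:ℝ) T, HasDerivWithinAt f (f' y) (Icc 0 T) y)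
    (hf' : ∀ y ∈ Icc (0:ℝ) T, f' y ≤ 0) : AntitoneOn f (Icc 0 T) :=
  antitoneOn_of_hasDerivWithinAt_nonpos (convex_Icc 0 T)
    (fun y hy => (hf y hy).continuousWithinAt)
    (fun y hy => (hf y (interior_subset hy)).mono interior_subset)
    (fun y hy => hf' y (interior_subset hy))

/-- One-sided comparison with the solution `v = -tanh (c y)` of `v' = -c (1 - v²)`, `v 0 = 0`.
The sign of `c` is unrestricted. -/
theorem le_neg_tanh_of_deriv_le {c T : ℝ} {v a : ℝ → ℝ}
    (hv : ∀ y ∈ Icc (0:ℝ) T, HasDerivWithinAt v (a y) (Icc 0 T) y)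
    (h0 : v 0 = 0) (hlt : ∀ y ∈ Icc (0:ℝ) T, |v y| < 1)
    (ha : ∀ y ∈ Icc (0:ℝ) T, a y ≤ -c * (1 - v y ^ 2)) :
    ∀ y ∈ Icc (0:ℝ) T, v y ≤ -Real.tanh (c * y) := by
  intro y hy
  -- The function is `artanh (v ·) + c ·`, with `artanh` expanded into logarithms.
  have hanti : AntitoneOn
      (fun y => 1 / 2 * (Real.log (1 + v y) - Real.log (1 - v y)) + c * y) (Icc 0 T) := by
    refine antitoneOn_Icc_of_hasDerivWithinAt
      (f' := fun y => 1 / 2 * (a y / (1 + v y) - (-a y) / (1 - v y)) + c * 1) ?_ ?_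
    · intro x hx
      obtain ⟨h1, h2⟩ := abs_lt.1 (hlt x hx)
      exact (((((hv x hx).const_add 1).log (by linarith)).sub
        (((hv x hx).const_sub 1).log (by linarith))).const_mul (1 / 2)).add
        ((hasDerivWithinAt_id x _).const_mul c)
    · intro x hx
      obtain ⟨h1, h2⟩ := abs_lt.1 (hlt x hx)
      have p1 : 0 < 1 + v x := by linarith
      have p2 : 0 < 1 - v x := by linarith
      have hq : 1 / 2 * (a x / (1 + v x) - (-a x) / (1 - v x)) = a x / (1 - v x ^ 2) := by
        have : 1 - v x ^ 2 = (1 + v x) * (1 - v x) := by ring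
        rw [this]
        field_simp
        ring
      have p3 : 0 < 1 - v x ^ 2 := by nlinarith
      have := (div_le_iff₀ p3).2 (ha x hx)
      simp only [hq]
      linarith
  have h := hanti (left_mem_Icc.2 (hy.1.trans hy.2)) hy hy.1
  simp only [h0, add_zero, sub_zero, Real.log_one, mul_zero, sub_self] at h
  obtain ⟨h1, h2⟩ := abs_lt.1 (hlt y hy)
  have hart : Real.artanh (v y) ≤ -(c * y) := by
    rw [Real.artanh_eq_half_log ⟨h1.le, h2.le⟩,
      Real.log_div (by linarith) (by linarith)]
    linarith
  rw [← Real.tanh_neg, ← Real.artanh_le_artanh_iff ⟨h1, h2⟩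
    ⟨Real.neg_one_lt_tanh _, Real.tanh_lt_one _⟩, Real.artanh_tanh]
  exact hart

/-- Integrated form of `le_neg_tanh_of_deriv_le`. -/
theorem le_sub_log_cosh_of_deriv_le {c T : ℝ} (hc : c ≠ 0) {R v : ℝ → ℝ}
    (hR : ∀ y ∈ Icc (0:ℝ) T, HasDerivWithinAt R (v y) (Icc 0 T) y)
    (hv : ∀ y ∈ Icc (0:ℝ) T, v y ≤ -Real.tanh (c * y)) :
    ∀ y ∈ Icc (0:ℝ) T, R y ≤ R 0 - (1 / c) * Real.log (Real.cosh (c * y)) := by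
  intro y hy
  have hanti : AntitoneOn
      (fun y => R y + (1 / c) * Real.log (Real.cosh (c * y))) (Icc 0 T) := by
    refine antitoneOn_Icc_of_hasDerivWithinAt
      (f' := fun y => v y + (1 / c) * ((Real.sinh (c * y) * (c * 1)) / Real.cosh (c * y))) ?_ ?_
    · intro x hx
      exact (hR x hx).add (((((hasDerivAt_id x).const_mul c).cosh.log
        (Real.cosh_pos _).ne').const_mul (1 / c)).hasDerivWithinAt)
    · intro x hx
      have hq : (1 / c) * ((Real.sinh (c * x) * (c * 1)) / Real.cosh (c * x))
          = Real.tanh (c * x) := by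
        rw [Real.tanh_eq_sinh_div_cosh]
        field_simp
      have := hv x hx
      simp only [hq]
      linarith
  have h := hanti (left_mem_Icc.2 (hy.1.trans hy.2)) hy hy.1
  simp only [mul_zero, Real.cosh_zero, Real.log_one, add_zero] at h
  linarith

/-- ODE comparison estimate for the interface radius
(current quenching): if `R'(0) = 0`, `|R'| < 1` and
`−K(1−R'²) ≤ R'' ≤ −k(1−R'²)` on `[0,T]`, then
`−tanh(Ky) ≤ R'(y) ≤ −tanh(ky)` and
`R(0) − (1/K) log cosh(Ky) ≤ R(y) ≤ R(0) − (1/k) log cosh(ky)` on `[0,T]`. -/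
theorem interface_radius_comparison
    (k K T : ℝ) (hk : 0 < k) (hkK : k ≤ K) (hT : 0 < T)
    (R R' R'' : ℝ → ℝ)
    (hR : ContDiffOn ℝ 2 R (Icc 0 T))
    (hR' : ∀ y ∈ Icc (0:ℝ) T, R' y = derivWithin R (Icc 0 T) y)
    (hR'' : ∀ y ∈ Icc (0:ℝ) T, R'' y = derivWithin R' (Icc 0 T) y)
    (h0 : R' 0 = 0)
    (hlt : ∀ y ∈ Icc (0:ℝ) T, |R' y| < 1)
    (hlower : ∀ y ∈ Icc (0:ℝ) T, -K * (1 - (R' y) ^ 2) ≤ R'' y)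
    (hupper : ∀ y ∈ Icc (0:ℝ) T, R'' y ≤ -k * (1 - (R' y) ^ 2)) :
    ∀ y ∈ Icc (0:ℝ) T,
      (-Real.tanh (K * y) ≤ R' y ∧ R' y ≤ -Real.tanh (k * y)) ∧
      (R 0 - (1 / K) * Real.log (Real.cosh (K * y)) ≤ R y ∧
        R y ≤ R 0 - (1 / k) * Real.log (Real.cosh (k * y))) := by
  have hT' : UniqueDiffOn ℝ (Icc (0:ℝ) T) := uniqueDiffOn_Icc hT
  have dR : ∀ y ∈ Icc (0:ℝ) T, HasDerivWithinAt R (R' y) (Icc 0 T) y := fun y hy => by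
    rw [hR' y hy]
    exact (hR.differentiableOn (by norm_num) y hy).hasDerivWithinAt
  have dR' : ∀ y ∈ Icc (0:ℝ) T, HasDerivWithinAt R' (R'' y) (Icc 0 T) y := fun y hy => by
    rw [hR'' y hy]
    have hd : ContDiffOn ℝ 1 (derivWithin R (Icc 0 T)) (Icc 0 T) :=
      hR.derivWithin hT' (by norm_num)
    exact (((hd.differentiableOn (by norm_num)).congr hR') y hy).hasDerivWithinAt
  have hU := le_neg_tanh_of_deriv_le dR' h0 hlt hupper
  have hL := le_neg_tanh_of_deriv_le (c := -K) (v := fun y => -R' y)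
    (fun y hy => (dR' y hy).neg) (by simp [h0]) (fun y hy => by simpa using hlt y hy)
    (fun y hy => by have := hlower y hy; simp only [neg_sq]; linarith)
  have hUR := le_sub_log_cosh_of_deriv_le hk.ne' dR hU
  have hLR := le_sub_log_cosh_of_deriv_le (neg_ne_zero.2 (hk.trans_le hkK).ne')
    (fun y hy => (dR y hy).neg) hL
  intro y hy
  have h1 := hL y hy
  have h2 := hLR y hy
  simp only [neg_mul, Real.tanh_neg, neg_neg, Real.cosh_neg, Pi.neg_apply, one_div, inv_neg]
    at h1 h2
  refine ⟨⟨by linarith, hU y hy⟩, ?_, hUR y hy⟩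
  rw [one_div]
  linarith
end
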